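/- arXiv:1711.05399 — 3 statements merged into one kernel-verified Lean document; each statement's English description precedes it below -/
import Mathlib

section
/- Let R be an integral domain and h a prime valuation on R. Then the function h̃ : Ideal(R) → ℕ∞ defined by h̃(I) = sup{ inf{h(P) : P a prime ideal of R with J ⊆ P} : J ⊆ I, J a finitely generated ideal of R } (with the convention that the infimum over the empty set of primes is ∞) is an ideal valuation on R. -/
/-!
Replacing a function `ν` on ideals by the supremum of its values on finitely generated subideals
always produces (IV3), and leaves the values of a monotone `ν` on finitely generated ideals
unchanged. For `ν I = inf {h P : I ⊆ P}` the values at `0` and `R` are therefore `inf h` and `∞`.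
A prime contains `IJ` exactly when it contains `I` or `J`, so `ν (IJ) = min (ν I) (ν J)`; since
products of finitely generated ideals are finitely generated and finite infima distribute over
suprema, (IV2) passes to the modified function.
-/

/-- An ideal valuation on an integral domain `R`. -/
def IsIdealValuation (R : Type*) [CommRing R] (ν : Ideal R → ℕ∞) : Prop :=
  ν ⊥ = 0 ∧ ν ⊤ = ⊤ ∧
  (∀ I J : Ideal R, min (ν I) (ν J) ≤ ν (I * J)) ∧
  (∀ I : Ideal R, ν I = ⨆ (J : Ideal R) (_ : J ≤ I) (_ : J.FG), ν J)

/-- A prime valuation on an integral domain `R`: a function on prime ideals with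
`h 0 = 0` that is monotone with respect to inclusion. -/
def IsPrimeValuation (R : Type*) [CommRing R] (h : PrimeSpectrum R → ℕ∞) : Prop :=
  (∀ P : PrimeSpectrum R, P.asIdeal = ⊥ → h P = 0) ∧
  (∀ P Q : PrimeSpectrum R, P.asIdeal ≤ Q.asIdeal → h P ≤ h Q)

section FGSup

variable {R α : Type*} [Semiring R] [CompleteLattice α]

/-- The finite-type modification of a function `ν` on ideals: its value at `I` is the supremum of
the values of `ν` on the finitely generated ideals contained in `I`. It turns a function on ideals
into one that satisfies (IV3). -/
def fgSup (ν : Ideal R → α) (I : Ideal R) : α :=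
  ⨆ (J : Ideal R) (_ : J ≤ I) (_ : J.FG), ν J

theorem le_fgSup (ν : Ideal R → α) {I J : Ideal R} (hJI : J ≤ I) (hJ : J.FG) :
    ν J ≤ fgSup ν I :=
  le_iSup₂_of_le J hJI (le_iSup_of_le hJ le_rfl)

theorem fgSup_le {ν : Ideal R → α} {I : Ideal R} {a : α} (hν : ∀ J ≤ I, J.FG → ν J ≤ a) :
    fgSup ν I ≤ a :=
  iSup₂_le fun J hJI => iSup_le (hν J hJI)

theorem fgSup_eq_of_fg {ν : Ideal R → α} (hν : Monotone ν) {I : Ideal R} (hI : I.FG) :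
    fgSup ν I = ν I :=
  le_antisymm (fgSup_le fun _ hJI _ => hν hJI) (le_fgSup ν le_rfl hI)

theorem fgSup_mono (ν : Ideal R → α) : Monotone (fgSup ν) :=
  fun _ _ hIJ => fgSup_le fun _ hKI hK => le_fgSup ν (hKI.trans hIJ) hK

theorem fgSup_fgSup (ν : Ideal R → α) : fgSup (fgSup ν) = fgSup ν :=
  funext fun _ => le_antisymm (fgSup_le fun _ hJI _ => fgSup_mono ν hJI)
    (fgSup_le fun _ hJI hJ => (le_fgSup ν le_rfl hJ).trans (le_fgSup (fgSup ν) hJI hJ))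

end FGSup

theorem fgSup_inf_fgSup_le_fgSup_mul {R α : Type*} [CommSemiring R] [Order.Frame α]
    {ν : Ideal R → α} (hν : ∀ I J, ν I ⊓ ν J ≤ ν (I * J)) (I J : Ideal R) :
    fgSup ν I ⊓ fgSup ν J ≤ fgSup ν (I * J) := by
  simp only [fgSup, iSup_inf_eq, inf_iSup_eq, iSup_le_iff]
  exact fun B hBJ hB A hAI hA =>
    (hν A B).trans (le_fgSup ν (Ideal.mul_mono hAI hBJ) (hA.mul hB))

section InfOfPrimes

variable {R α : Type*} [CommSemiring R] [CompleteLattice α]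

/-- The extension of a function `h` on primes to all ideals by `I ↦ inf {h P : I ⊆ P}`. The infimum
over the empty set of primes is `⊤`. -/
def primeInf (h : PrimeSpectrum R → α) (I : Ideal R) : α :=
  ⨅ (P : PrimeSpectrum R) (_ : I ≤ P.asIdeal), h P

theorem primeInf_mono (h : PrimeSpectrum R → α) : Monotone (primeInf h) :=
  fun _ _ hIJ => iInf_mono fun _ => iInf_mono' fun hJP => ⟨hIJ.trans hJP, le_rfl⟩

theorem primeInf_bot (h : PrimeSpectrum R → α) : primeInf h ⊥ = ⨅ P, h P := by
  simp [primeInf]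

theorem primeInf_top (h : PrimeSpectrum R → α) : primeInf h ⊤ = ⊤ := by
  simp [primeInf, Ideal.IsPrime.ne_top]

theorem primeInf_mul (h : PrimeSpectrum R → α) (I J : Ideal R) :
    primeInf h (I * J) = primeInf h I ⊓ primeInf h J := by
  simp only [primeInf, (PrimeSpectrum.isPrime _).mul_le, iInf_or, iInf_inf_eq]

end InfOfPrimes

theorem idealValuation_of_primeValuation_general
    (R : Type*) [CommRing R] (h : PrimeSpectrum R → ℕ∞) :
    IsIdealValuation R (fgSup (primeInf h)) ↔ ∃ P, h P = 0 := by
  have map_bot : fgSup (primeInf h) ⊥ = ⨅ P, h P :=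
    (fgSup_eq_of_fg (primeInf_mono h) Submodule.fg_bot).trans (primeInf_bot h)
  have map_top : fgSup (primeInf h) ⊤ = ⊤ :=
    (fgSup_eq_of_fg (primeInf_mono h) Module.Finite.fg_top).trans (primeInf_top h)
  rw [← ENat.iInf_eq_zero, ← map_bot]
  refine ⟨fun hν => hν.1, fun hbot => ⟨hbot, map_top, ?_, ?_⟩⟩
  · exact fgSup_inf_fgSup_le_fgSup_mul fun I J => (primeInf_mul h I J).ge
  · exact fun I => (congrFun (fgSup_fgSup (primeInf h)) I).symm

theorem idealValuation_of_primeValuation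
    (R : Type*) [CommRing R] [IsDomain R] (h : PrimeSpectrum R → ℕ∞)
    (hpv : IsPrimeValuation R h) :
    IsIdealValuation R
      (fun I => ⨆ (J : Ideal R) (_ : J ≤ I) (_ : J.FG),
        ⨅ (P : PrimeSpectrum R) (_ : J ≤ P.asIdeal), h P) :=
  (idealValuation_of_primeValuation_general R h).2 ⟨⟨⊥, Ideal.isPrime_bot⟩, hpv.1 _ rfl⟩
end

section
/- Let R be an integral domain with quotient field K, and let {*_n}_{n≥0} be a standard, countable descending chain of finite type, stable semistar operations on R, i.e., each *_n is a finite type stable semistar operation, *_0 = e, and E^{*_{n+1}} ⊆ E^{*_n} for every n ≥ 0 and every E ∈ F̄(R). Define ν_C : Ideal(R) → ℕ∞ by ν_C(0) = 0 and ν_C(I) = sup{k ∈ ℕ : I^{*_k} = R^{*_k}} for nonzero ideals I. Then ν_C is an ideal valuation on R. -/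
/-!
For a semistar operation `*`, a nonzero ideal `I` satisfies `I^* = R^*` exactly when `R ⊆ I^*`.
The ideals with this property are closed under products: if `R ⊆ J^*`, then
`I ⊆ I J^* ⊆ (I J)^*`, so `R ⊆ I^*` forces `R ⊆ (I J)^*`. If `*` is of finite type, then
`1 ∈ I^*` is already witnessed by a finitely generated ideal inside `I`. A descending chain of
operations thus yields a descending sequence of multiplicatively closed sets of ideals, and `ν_C`
measures how far along this sequence an ideal survives; closure under products gives (IV2) and
finite type gives (IV3).
-/

open Pointwise

/-- A semistar operation on an integral domain `R` with quotient field `K`, viewed as an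
operation on `R`-submodules of `K` (only its behaviour on nonzero submodules matters). -/
def IsSemistarOp (R : Type*) [CommRing R] [IsDomain R]
    (s : Submodule R (FractionRing R) → Submodule R (FractionRing R)) : Prop :=
  (∀ E : Submodule R (FractionRing R), E ≠ ⊥ → E ≤ s E) ∧
  (∀ E F : Submodule R (FractionRing R), E ≠ ⊥ → F ≠ ⊥ → E ≤ F → s E ≤ s F) ∧
  (∀ x : FractionRing R, x ≠ 0 → ∀ E : Submodule R (FractionRing R), E ≠ ⊥ →
      s (x • E) = x • s E) ∧
  (∀ E : Submodule R (FractionRing R), E ≠ ⊥ → s (s E) = s E)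

/-- A semistar operation is stable if it distributes over finite intersections. -/
def IsStableStar (R : Type*) [CommRing R] [IsDomain R]
    (s : Submodule R (FractionRing R) → Submodule R (FractionRing R)) : Prop :=
  ∀ E F : Submodule R (FractionRing R), E ≠ ⊥ → F ≠ ⊥ → s (E ⊓ F) = s E ⊓ s F

/-- A semistar operation is of finite type if `E^* = ∪ {J^* : J ⊆ E, J nonzero f.g.}`. -/
def IsFiniteTypeStar (R : Type*) [CommRing R] [IsDomain R]
    (s : Submodule R (FractionRing R) → Submodule R (FractionRing R)) : Prop :=
  ∀ E : Submodule R (FractionRing R), E ≠ ⊥ →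
    (s E : Set (FractionRing R)) =
      ⋃ J ∈ {J : Submodule R (FractionRing R) | J ≤ E ∧ J ≠ ⊥ ∧ J.FG},
        (s J : Set (FractionRing R))

/-- The image of an ideal of `R` in the quotient field, as an `R`-submodule. -/
def idealToFrac (R : Type*) [CommRing R] [IsDomain R] (I : Ideal R) :
    Submodule R (FractionRing R) :=
  Submodule.map (Algebra.linearMap R (FractionRing R)) I

section FiltrationOrder

variable {α : Type*} {F : ℕ → Set α} {a : α}

/-- The order of `a` along a sequence of sets `F`: the supremum of the indices `k` with `a ∈ F k`,
equal to `0` if there are none. The function `ν_C` is the order along the sets of ideals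
that become trivial under the operations of the chain `C`. -/
noncomputable def filtrationOrder (F : ℕ → Set α) (a : α) : ℕ∞ :=
  ⨆ (k : ℕ) (_ : a ∈ F k), (k : ℕ∞)

theorem natCast_le_filtrationOrder {n : ℕ} (ha : a ∈ F n) : (n : ℕ∞) ≤ filtrationOrder F a :=
  le_iSup₂_of_le n ha le_rfl

theorem natCast_le_filtrationOrder_iff (hF : Antitone F) {n : ℕ} (hn : n ≠ 0) :
    (n : ℕ∞) ≤ filtrationOrder F a ↔ a ∈ F n := by
  refine ⟨fun h ↦ ?_, natCast_le_filtrationOrder⟩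
  obtain ⟨m, rfl⟩ := Nat.exists_eq_succ_of_ne_zero hn
  have hm : (m : ℕ∞) < filtrationOrder F a := by
    rwa [← ENat.natCast_add_one_le_iff, ← Nat.cast_succ]
  simp only [filtrationOrder, lt_iSup_iff, Nat.cast_lt] at hm
  obtain ⟨k, hak, hmk⟩ := hm
  exact hF hmk hak

end FiltrationOrder

section MulSystem

variable {R : Type*} [CommRing R]

/-- A generalized multiplicative system of ideals of finite type: a set of ideals that contains `R`
and is closed under products and under passing to larger ideals, in which every member contains
a finitely generated member. Nothing excludes the zero ideal. -/
structure IsFiniteTypeMulSystem (S : Set (Ideal R)) : Prop where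
  top_mem : ⊤ ∈ S
  mem_of_le : ∀ ⦃I J : Ideal R⦄, I ∈ S → I ≤ J → J ∈ S
  mul_mem : ∀ ⦃I J : Ideal R⦄, I ∈ S → J ∈ S → I * J ∈ S
  exists_fg_le : ∀ ⦃I : Ideal R⦄, I ∈ S → ∃ J ∈ S, J ≤ I ∧ J.FG

theorem isIdealValuation_filtrationOrder {F : ℕ → Set (Ideal R)} (hF : Antitone F)
    (hsys : ∀ n, IsFiniteTypeMulSystem (F n)) (hbot : ⊥ ∉ F 1) :
    IsIdealValuation R (filtrationOrder F) := by
  refine ⟨?_, ?_, fun I J ↦ ?_, fun I ↦ le_antisymm ?_ ?_⟩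
  · rwa [← natCast_le_filtrationOrder_iff hF one_ne_zero, Nat.cast_one,
      Order.one_le_iff_ne_zero, not_not] at hbot
  · exact ENat.eq_top_iff_forall_ge.2 fun n ↦ natCast_le_filtrationOrder (hsys n).top_mem
  · refine ENat.forall_natCast_le_iff_le.1 fun n hn ↦ ?_
    rcases eq_or_ne n 0 with rfl | hn0
    · exact zero_le
    · simp only [le_min_iff, natCast_le_filtrationOrder_iff hF hn0] at hn ⊢
      exact (hsys n).mul_mem hn.1 hn.2
  · refine iSup₂_le fun k hI ↦ ?_
    obtain ⟨J, hJ, hJI, hJfg⟩ := (hsys k).exists_fg_le hI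
    exact le_iSup_of_le J <| le_iSup₂_of_le hJI hJfg <| natCast_le_filtrationOrder hJ
  · exact iSup_le fun J ↦ iSup₂_le fun hJI _ ↦ iSup₂_le fun k hJ ↦
      natCast_le_filtrationOrder ((hsys k).mem_of_le hJ hJI)

end MulSystem

section Semistar

variable {R : Type*} [CommRing R] [IsDomain R]
  {s : Submodule R (FractionRing R) → Submodule R (FractionRing R)}
  {E F : Submodule R (FractionRing R)} {I J : Ideal R}

theorem idealToFrac_injective : Function.Injective (idealToFrac R) :=
  IsLocalization.coeSubmodule_injective (FractionRing R) (le_refl (nonZeroDivisors R))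

theorem idealToFrac_mono (h : I ≤ J) : idealToFrac R I ≤ idealToFrac R J :=
  IsLocalization.coeSubmodule_mono _ h

theorem idealToFrac_bot : idealToFrac R ⊥ = ⊥ :=
  IsLocalization.coeSubmodule_bot _

theorem idealToFrac_top : idealToFrac R ⊤ = 1 :=
  IsLocalization.coeSubmodule_top _

theorem idealToFrac_mul (I J : Ideal R) :
    idealToFrac R (I * J) = idealToFrac R I * idealToFrac R J :=
  IsLocalization.coeSubmodule_mul _ I J

theorem idealToFrac_le_one (I : Ideal R) : idealToFrac R I ≤ 1 :=
  idealToFrac_top (R := R) ▸ idealToFrac_mono le_top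

theorem idealToFrac_eq_bot_iff : idealToFrac R I = ⊥ ↔ I = ⊥ := by
  rw [← idealToFrac_bot, idealToFrac_injective.eq_iff]

theorem exists_fg_le_idealToFrac_eq (hE : E ≤ idealToFrac R I) (hfg : E.FG) :
    ∃ J ≤ I, J.FG ∧ idealToFrac R J = E := by
  let J : Ideal R := I ⊓ E.comap (Algebra.linearMap R (FractionRing R))
  have hJE : idealToFrac R J = E :=
    Submodule.map_inf_eq_map_inf_comap.symm.trans (inf_eq_right.2 hE)
  refine ⟨J, inf_le_left, ?_, hJE⟩
  rw [← hJE] at hfg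
  exact (IsLocalization.coeSubmodule_fg _ (IsFractionRing.injective R (FractionRing R)) J).1 hfg

namespace IsSemistarOp

theorem le_star (hs : IsSemistarOp R s) (hE : E ≠ ⊥) : E ≤ s E :=
  hs.1 E hE

theorem star_mono (hs : IsSemistarOp R s) (hE : E ≠ ⊥) (h : E ≤ F) : s E ≤ s F :=
  hs.2.1 E F hE (ne_bot_of_le_ne_bot hE h) h

theorem star_smul (hs : IsSemistarOp R s) {x : FractionRing R} (hx : x ≠ 0) (hE : E ≠ ⊥) :
    s (x • E) = x • s E :=
  hs.2.2.1 x hx E hE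

theorem star_star (hs : IsSemistarOp R s) (hE : E ≠ ⊥) : s (s E) = s E :=
  hs.2.2.2 E hE

theorem star_le_star_iff (hs : IsSemistarOp R s) (hE : E ≠ ⊥) (hF : F ≠ ⊥) :
    s E ≤ s F ↔ E ≤ s F :=
  ⟨(hs.le_star hE).trans, fun h ↦ (hs.star_mono hE h).trans_eq (hs.star_star hF)⟩

theorem star_eq_star_iff_of_le (hs : IsSemistarOp R s) (hE : E ≠ ⊥) (h : E ≤ F) :
    s E = s F ↔ F ≤ s E := by
  rw [← hs.star_le_star_iff (ne_bot_of_le_ne_bot hE h) hE]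
  exact ⟨Eq.ge, (hs.star_mono hE h).antisymm⟩

theorem mul_star_le (hs : IsSemistarOp R s) (hF : F ≠ ⊥) : E * s F ≤ s (E * F) := by
  refine Submodule.mul_le.2 fun x hx y hy ↦ ?_
  rcases eq_or_ne x 0 with rfl | hx0
  · rw [zero_mul]
    exact zero_mem _
  have hxF : x • F ≠ ⊥ := (smul_ne_zero_iff_ne (Units.mk0 x hx0)).2 hF
  have hle : x • F ≤ E * F := by
    rintro _ ⟨z, hz, rfl⟩
    exact Submodule.mul_mem_mul hx hz
  refine hs.star_mono hxF hle ?_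
  rw [hs.star_smul hx0 hF]
  exact Submodule.smul_mem_pointwise_smul y x _ hy

theorem one_le_star_mul (hs : IsSemistarOp R s) (hE : E ≠ ⊥) (hF : F ≠ ⊥)
    (h1E : 1 ≤ s E) (h1F : 1 ≤ s F) : 1 ≤ s (E * F) := by
  have hEF : E ≤ s (E * F) :=
    calc
      E = E * 1 := (mul_one E).symm
      _ ≤ E * s F := mul_le_mul_right h1F E
      _ ≤ s (E * F) := hs.mul_star_le hF
  exact h1E.trans ((hs.star_le_star_iff hE (mul_ne_zero hE hF)).2 hEF)

end IsSemistarOp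

theorem IsFiniteTypeStar.exists_fg_mem (hft : IsFiniteTypeStar R s) (hE : E ≠ ⊥)
    {x : FractionRing R} (hx : x ∈ s E) : ∃ F ≤ E, F ≠ ⊥ ∧ F.FG ∧ x ∈ s F := by
  rw [← SetLike.mem_coe, hft E hE] at hx
  simpa only [Set.mem_iUnion₂, Set.mem_ofPred_eq, SetLike.mem_coe, exists_prop, and_assoc] using hx

/-- The set of nonzero ideals `I` with `I^* = R^*`; for a stable operation `*` it is the localizing
system associated with `*`. The zero ideal has to be excluded by hand, since `IsSemistarOp` says
nothing about the value of `*` at `0`. -/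
def starUnitIdeals (s : Submodule R (FractionRing R) → Submodule R (FractionRing R)) :
    Set (Ideal R) :=
  {I | I ≠ ⊥ ∧ s (idealToFrac R I) = s (idealToFrac R ⊤)}

theorem bot_notMem_starUnitIdeals : ⊥ ∉ starUnitIdeals s :=
  fun h ↦ h.1 rfl

theorem IsSemistarOp.mem_starUnitIdeals_iff (hs : IsSemistarOp R s) :
    I ∈ starUnitIdeals s ↔ I ≠ ⊥ ∧ 1 ≤ s (idealToFrac R I) := by
  refine and_congr_right fun hI ↦ ?_
  rw [idealToFrac_top]
  exact hs.star_eq_star_iff_of_le (idealToFrac_eq_bot_iff.not.2 hI) (idealToFrac_le_one I)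

theorem IsSemistarOp.isFiniteTypeMulSystem_starUnitIdeals (hs : IsSemistarOp R s)
    (hft : IsFiniteTypeStar R s) : IsFiniteTypeMulSystem (starUnitIdeals s) where
  top_mem := ⟨top_ne_bot, rfl⟩
  mem_of_le I J hI hIJ := by
    rw [hs.mem_starUnitIdeals_iff] at hI ⊢
    have hI0 := idealToFrac_eq_bot_iff.not.2 hI.1
    exact ⟨ne_bot_of_le_ne_bot hI.1 hIJ, hI.2.trans (hs.star_mono hI0 (idealToFrac_mono hIJ))⟩
  mul_mem I J hI hJ := by
    rw [hs.mem_starUnitIdeals_iff] at hI hJ ⊢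
    rw [idealToFrac_mul]
    exact ⟨mul_ne_zero hI.1 hJ.1, hs.one_le_star_mul (idealToFrac_eq_bot_iff.not.2 hI.1)
      (idealToFrac_eq_bot_iff.not.2 hJ.1) hI.2 hJ.2⟩
  exists_fg_le I hI := by
    rw [hs.mem_starUnitIdeals_iff, Submodule.one_le] at hI
    obtain ⟨E, hEI, hE, hEfg, h1E⟩ := hft.exists_fg_mem (idealToFrac_eq_bot_iff.not.2 hI.1) hI.2
    obtain ⟨J, hJI, hJfg, rfl⟩ := exists_fg_le_idealToFrac_eq hEI hEfg
    exact ⟨J, hs.mem_starUnitIdeals_iff.2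
      ⟨idealToFrac_eq_bot_iff.not.1 hE, Submodule.one_le.2 h1E⟩, hJI, hJfg⟩

theorem antitone_starUnitIdeals
    {s : ℕ → Submodule R (FractionRing R) → Submodule R (FractionRing R)}
    (hss : ∀ n, IsSemistarOp R (s n)) (hdesc : ∀ n, ∀ E ≠ ⊥, s (n + 1) E ≤ s n E) :
    Antitone fun n ↦ starUnitIdeals (s n) := by
  refine antitone_nat_of_succ_le fun n I hI ↦ ?_
  rw [(hss _).mem_starUnitIdeals_iff] at hI ⊢
  exact ⟨hI.1, hI.2.trans (hdesc n _ (idealToFrac_eq_bot_iff.not.2 hI.1))⟩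

open Classical in
theorem filtrationOrder_starUnitIdeals
    (s : ℕ → Submodule R (FractionRing R) → Submodule R (FractionRing R)) (I : Ideal R) :
    filtrationOrder (fun n ↦ starUnitIdeals (s n)) I = if I = ⊥ then 0
      else ⨆ (k : ℕ) (_ : s k (idealToFrac R I) = s k (idealToFrac R ⊤)), (k : ℕ∞) := by
  split_ifs with hI <;> simp [filtrationOrder, starUnitIdeals, hI]

end Semistar

open Classical in
theorem idealValuation_of_standard_chain_general
    (R : Type*) [CommRing R] [IsDomain R]
    (s : ℕ → Submodule R (FractionRing R) → Submodule R (FractionRing R))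
    (hss : ∀ n, IsSemistarOp R (s n))
    (hft : ∀ n, IsFiniteTypeStar R (s n))
    (hdesc : ∀ n, ∀ E : Submodule R (FractionRing R), E ≠ ⊥ → s (n + 1) E ≤ s n E) :
    IsIdealValuation R
      (fun I => if I = ⊥ then 0
        else ⨆ (k : ℕ) (_ : s k (idealToFrac R I) = s k (idealToFrac R ⊤)), (k : ℕ∞)) := by
  simp only [← filtrationOrder_starUnitIdeals]
  exact isIdealValuation_filtrationOrder (antitone_starUnitIdeals hss hdesc)
    (fun n ↦ (hss n).isFiniteTypeMulSystem_starUnitIdeals (hft n)) bot_notMem_starUnitIdeals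

open Classical in
theorem idealValuation_of_standard_chain
    (R : Type*) [CommRing R] [IsDomain R]
    (s : ℕ → Submodule R (FractionRing R) → Submodule R (FractionRing R))
    (hss : ∀ n, IsSemistarOp R (s n))
    (hft : ∀ n, IsFiniteTypeStar R (s n))
    (hstab : ∀ n, IsStableStar R (s n))
    (h0 : ∀ E : Submodule R (FractionRing R), E ≠ ⊥ → s 0 E = ⊤)
    (hdesc : ∀ n, ∀ E : Submodule R (FractionRing R), E ≠ ⊥ → s (n + 1) E ≤ s n E) :
    IsIdealValuation R
      (fun I => if I = ⊥ then 0
        else ⨆ (k : ℕ) (_ : s k (idealToFrac R I) = s k (idealToFrac R ⊤)), (k : ℕ∞)) :=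
  idealValuation_of_standard_chain_general R s hss hft hdesc
end

section
/- Let R be an integral domain with quotient field K and ν an ideal valuation on R. For each n ∈ ℕ and each nonzero R-submodule E of K define E^{ν_n} = ∪{(E :_K J) : J an ideal of R with ν(J) ≥ n}, where (E :_K J) = {x ∈ K : xJ ⊆ E}. Then for every nonzero ideal I of R and every n ∈ ℕ: I^{ν_n} = R^{ν_n} if and only if ν(I) ≥ n. Consequently, ν(I) = sup{k ∈ ℕ : I^{ν_k} = R^{ν_k}} for every nonzero ideal I of R; that is, the ideal valuation associated to the chain of operations {ν_n} induced by ν is ν itself. -/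
/-- The colon `(E :_K J)` of an `R`-submodule `E` of the quotient field `K` by an ideal
`J` of `R`: the set of `x ∈ K` with `xJ ⊆ E`. -/
def fracColon (R : Type*) [CommRing R] [IsDomain R]
    (E : Submodule R (FractionRing R)) (J : Ideal R) : Set (FractionRing R) :=
  {x : FractionRing R | ∀ j ∈ J, x * algebraMap R (FractionRing R) j ∈ E}

/-- The semistar operation `ν_n` induced by an ideal valuation `ν`, as a set:
`E^{ν_n} = ∪ {(E :_K J) : J an ideal of R with ν(J) ≥ n}`. -/
def nuStar (R : Type*) [CommRing R] [IsDomain R] (ν : Ideal R → ℕ∞) (n : ℕ)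
    (E : Submodule R (FractionRing R)) : Set (FractionRing R) :=
  ⋃ J ∈ {J : Ideal R | (n : ℕ∞) ≤ ν J}, fracColon R E J

/-!
The element `1` always lies in `R^{ν_n}`, and it lies in `I^{ν_n}` exactly when `ν I ≥ n`.
Conversely, if `xJ ⊆ E` then `x(IJ) ⊆ IE`, so when `ν I ≥ n` a witness `J` for `x ∈ E^{ν_n}` yields
the witness `IJ` for `x ∈ (IE)^{ν_n}`; take `E = R`.
-/

theorem IsIdealValuation.monotone {R : Type*} [CommRing R] {ν : Ideal R → ℕ∞}
    (hν : IsIdealValuation R ν) : Monotone ν := by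
  intro I J hIJ
  rw [hν.2.2.2 I, hν.2.2.2 J]
  exact iSup_mono fun A => iSup_mono' fun hAI => ⟨hAI.trans hIJ, le_rfl⟩

theorem iSup_natCast_le_eq_self (a : ℕ∞) : ⨆ (k : ℕ) (_ : (k : ℕ∞) ≤ a), (k : ℕ∞) = a :=
  le_antisymm (iSup₂_le fun _ hk => hk)
    (ENat.forall_natCast_le_iff_le.1 fun k hk =>
      le_iSup₂ (f := fun (k : ℕ) (_ : (k : ℕ∞) ≤ a) => (k : ℕ∞)) k hk)

section Colon

variable {R : Type*} [CommRing R] [IsDomain R] {E F : Submodule R (FractionRing R)}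
  {x : FractionRing R}

theorem algebraMap_mem_idealToFrac {I : Ideal R} {a : R} :
    algebraMap R (FractionRing R) a ∈ idealToFrac R I ↔ a ∈ I :=
  (IsFractionRing.injective R (FractionRing R)).mem_set_image

theorem smul_idealToFrac (I J : Ideal R) : I • idealToFrac R J = idealToFrac R (I * J) :=
  (Submodule.map_smul'' I J (Algebra.linearMap R (FractionRing R))).symm

theorem mem_fracColon_iff_smul_span_le {J : Ideal R} :
    x ∈ fracColon R E J ↔ J • Submodule.span R {x} ≤ E := by
  simp only [fracColon, Set.mem_ofPred_eq, SetLike.le_def, Submodule.mem_smul_span_singleton,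
    forall_exists_index, and_imp, forall_apply_eq_imp_iff₂, Algebra.smul_def, mul_comm x]

theorem fracColon_mono_left (hEF : E ≤ F) (J : Ideal R) : fracColon R E J ⊆ fracColon R F J :=
  fun _ hx j hj => hEF (hx j hj)

theorem one_mem_fracColon_idealToFrac {I J : Ideal R} :
    1 ∈ fracColon R (idealToFrac R I) J ↔ J ≤ I := by
  simp only [fracColon, Set.mem_ofPred_eq, one_mul, algebraMap_mem_idealToFrac, SetLike.le_def]

theorem mem_fracColon_smul_mul {J : Ideal R} (I : Ideal R) (hx : x ∈ fracColon R E J) :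
    x ∈ fracColon R (I • E) (I * J) := by
  rw [mem_fracColon_iff_smul_span_le] at hx ⊢
  rw [Submodule.mul_smul]
  exact smul_mono_right I hx

end Colon

section Star

variable {R : Type*} [CommRing R] [IsDomain R] {ν : Ideal R → ℕ∞} {n : ℕ}
  {E F : Submodule R (FractionRing R)}

theorem mem_nuStar {x : FractionRing R} :
    x ∈ nuStar R ν n E ↔ ∃ J : Ideal R, (n : ℕ∞) ≤ ν J ∧ x ∈ fracColon R E J := by
  simp only [nuStar, Set.mem_ofPred_eq, Set.mem_iUnion, exists_prop]

theorem nuStar_mono (hEF : E ≤ F) : nuStar R ν n E ⊆ nuStar R ν n F :=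
  Set.biUnion_mono subset_rfl fun J _ => fracColon_mono_left hEF J

theorem one_mem_nuStar_idealToFrac (hmono : Monotone ν) {I : Ideal R} :
    1 ∈ nuStar R ν n (idealToFrac R I) ↔ (n : ℕ∞) ≤ ν I := by
  simp only [mem_nuStar, one_mem_fracColon_idealToFrac]
  exact ⟨fun ⟨_, hnJ, hJI⟩ => hnJ.trans (hmono hJI), fun hnI => ⟨I, hnI, le_rfl⟩⟩

theorem nuStar_smul (hmul : ∀ I J : Ideal R, min (ν I) (ν J) ≤ ν (I * J)) {I : Ideal R}
    (hnI : (n : ℕ∞) ≤ ν I) (E : Submodule R (FractionRing R)) :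
    nuStar R ν n (I • E) = nuStar R ν n E := by
  refine (nuStar_mono Submodule.smul_le_right).antisymm fun x hx => ?_
  obtain ⟨J, hnJ, hxJ⟩ := mem_nuStar.1 hx
  exact mem_nuStar.2 ⟨I * J, (le_min hnI hnJ).trans (hmul I J), mem_fracColon_smul_mul I hxJ⟩

theorem nuStar_idealToFrac_eq_iff_le (hmono : Monotone ν) (htop : ν ⊤ = ⊤)
    (hmul : ∀ I J : Ideal R, min (ν I) (ν J) ≤ ν (I * J)) {I : Ideal R} :
    nuStar R ν n (idealToFrac R I) = nuStar R ν n (idealToFrac R ⊤) ↔ (n : ℕ∞) ≤ ν I := by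
  constructor
  · intro heq
    rw [← one_mem_nuStar_idealToFrac hmono, heq, one_mem_nuStar_idealToFrac hmono, htop]
    exact le_top
  · intro hnI
    rw [← nuStar_smul hmul hnI (idealToFrac R ⊤), smul_idealToFrac, Ideal.mul_top]

end Star

theorem idealValuation_recovered_from_chain_general {R : Type*} [CommRing R] [IsDomain R]
    {ν : Ideal R → ℕ∞} (hmono : Monotone ν) (htop : ν ⊤ = ⊤)
    (hmul : ∀ I J : Ideal R, min (ν I) (ν J) ≤ ν (I * J)) (I : Ideal R) :
    (∀ n : ℕ,
      nuStar R ν n (idealToFrac R I) = nuStar R ν n (idealToFrac R ⊤) ↔ (n : ℕ∞) ≤ ν I) ∧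
    ν I = ⨆ (k : ℕ)
      (_ : nuStar R ν k (idealToFrac R I) = nuStar R ν k (idealToFrac R ⊤)), (k : ℕ∞) := by
  simp only [nuStar_idealToFrac_eq_iff_le hmono htop hmul, iSup_natCast_le_eq_self,
    implies_true, and_self]

theorem idealValuation_recovered_from_chain
    (R : Type*) [CommRing R] [IsDomain R] (ν : Ideal R → ℕ∞)
    (hν : IsIdealValuation R ν) :
    (∀ I : Ideal R, I ≠ ⊥ → ∀ n : ℕ,
        (nuStar R ν n (idealToFrac R I) = nuStar R ν n (idealToFrac R ⊤) ↔ (n : ℕ∞) ≤ ν I)) ∧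
    (∀ I : Ideal R, I ≠ ⊥ →
        ν I = ⨆ (k : ℕ)
          (_ : nuStar R ν k (idealToFrac R I) = nuStar R ν k (idealToFrac R ⊤)), (k : ℕ∞)) := by
  have h := idealValuation_recovered_from_chain_general hν.monotone hν.2.1 hν.2.2.1
  exact ⟨fun I _ => (h I).1, fun I _ => (h I).2⟩
end
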